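/- For every n ∈ ℕ with n ≥ 1 and every ν ∈ [0,1] one has F_{2n}(ν) ≤ w_ν ≤ F_{2n−1}(ν). -/

import Mathlib

/-- Υ_ν := √(1 − ν²). -/
noncomputable def Ups (ν : ℝ) : ℝ := Real.sqrt (1 - ν ^ 2)

/-- w_ν := Υ_ν · cot(π Υ_ν / 2) for ν ∈ [0,1), with w_1 := 2/π (continuous extension). -/
noncomputable def w (ν : ℝ) : ℝ :=
  if ν = 1 then 2 / Real.pi else Ups ν * Real.cot (Real.pi * Ups ν / 2)

/-- F_n(ν) := ∑_{k=1}^n (−1)^{k+1} (∑_{j=1}^∞ 16j²/(π(4j²−1)^{k+1})) ν^{2k}. -/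
noncomputable def F (n : ℕ) (ν : ℝ) : ℝ :=
  ∑ k ∈ Finset.Icc 1 n,
    (-1 : ℝ) ^ (k + 1)
      * (∑' j : ℕ, 16 * ((j : ℝ) + 1) ^ 2 / (Real.pi * (4 * ((j : ℝ) + 1) ^ 2 - 1) ^ (k + 1)))
      * ν ^ (2 * k)

theorem tele : HasSum (fun j : ℕ => 1 / (4 * ((j : ℝ) + 1) ^ 2 - 1)) (1/2) := by
  have h0 : ∀ j : ℕ, (0:ℝ) < 4 * ((j : ℝ) + 1) ^ 2 - 1 := fun j => by
    have : (0:ℝ) ≤ j := j.cast_nonneg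
    nlinarith
  rw [hasSum_iff_tendsto_nat_of_nonneg (fun j => (div_pos one_pos (h0 j)).le)]
  have h : ∀ n : ℕ, ∑ j ∈ Finset.range n, 1 / (4 * ((j : ℝ) + 1) ^ 2 - 1)
      = 1/2 - (1/4) / ((n:ℝ) + 1/2) := by
    intro n
    induction n with
    | zero => norm_num
    | succ k ih =>
      rw [Finset.sum_range_succ, ih]
      have h1 := (h0 k).ne'
      have h2 : (k:ℝ) + 1/2 ≠ 0 := by positivity
      have h3 : ((k+1 : ℕ):ℝ) + 1/2 ≠ 0 := by positivity
      push_cast at h3 ⊢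
      have e : 4 * ((k : ℝ) + 1) ^ 2 - 1 = 4 * (k+1/2) * (k+1+1/2) := by ring
      rw [e]
      field_simp
      ring
  simp_rw [h]
  have : Filter.Tendsto (fun n : ℕ => (1/4 : ℝ) / ((n:ℝ) + 1/2)) Filter.atTop (nhds 0) :=
    Filter.Tendsto.const_div_atTop
      (Filter.tendsto_atTop_add_const_right _ _ tendsto_natCast_atTop_atTop) _
  have h5 := this.const_sub (1/2)
  rw [sub_zero] at h5
  exact h5

theorem a_ge (j : ℕ) : (3:ℝ) ≤ 4 * ((j : ℝ) + 1) ^ 2 - 1 := by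
  have : (0:ℝ) ≤ j := j.cast_nonneg
  nlinarith

theorem cot_real (x : ℝ) (h0 : 0 < x) (h1 : x < 1) :
    HasSum (fun j : ℕ => 1 / (x - ((j:ℝ) + 1)) + 1 / (x + ((j:ℝ) + 1)))
      (Real.pi * Real.cot (Real.pi * x) - 1 / x) := by
  have hz : (x : ℂ) ∈ Complex.integerComplement := by
    rw [Complex.mem_integerComplement_iff]
    rintro ⟨n, hn⟩
    have hn' : (n : ℝ) = x := by exact_mod_cast hn
    rw [← hn'] at h0 h1
    have a1 : 0 < n := by exact_mod_cast h0
    have a2 : n < 1 := by exact_mod_cast h1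
    omega
  rw [← Complex.hasSum_ofReal]
  have h := (summable_cotTerm hz).hasSum
  have h2 := cot_series_rep' hz
  unfold cotTerm at h
  rw [← h2] at h
  push_cast [Complex.ofReal_cot]
  exact h

theorem w_hasSum (ν : ℝ) (hν : ν ∈ Set.Icc (0 : ℝ) 1) :
    HasSum (fun j : ℕ => 16 * ((j : ℝ) + 1) ^ 2 * ν ^ 2 /
      (Real.pi * (4 * ((j : ℝ) + 1) ^ 2 - 1) * (4 * ((j : ℝ) + 1) ^ 2 - 1 + ν ^ 2))) (w ν) := by
  obtain ⟨hν0, hν1⟩ := hν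
  have hpi := Real.pi_ne_zero
  unfold w
  split_ifs with h
  · subst h
    have ht := tele.mul_left (4 / Real.pi)
    have e : 4 / Real.pi * (1/2) = 2 / Real.pi := by ring
    rw [e] at ht
    refine ht.congr_fun ?_ 
    intro j
    have ha : (4 * ((j : ℝ) + 1) ^ 2 - 1) ≠ 0 := by linarith [a_ge j]
    have ha' : (j:ℝ) + 1 ≠ 0 := by positivity
    have e2 : 4 * ((j : ℝ) + 1) ^ 2 - 1 + 1 ^ 2 = 4 * ((j : ℝ) + 1) ^ 2 := by ring
    rw [e2]
    field_simp
    norm_num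
  · have hlt : ν < 1 := lt_of_le_of_ne hν1 h
    have hpos : 0 < 1 - ν ^ 2 := by nlinarith
    have hy : Ups ν ^ 2 = 1 - ν ^ 2 := Real.sq_sqrt hpos.le
    have hy0 : 0 < Ups ν := Real.sqrt_pos.mpr hpos
    generalize Ups ν = y at hy hy0
    have hy1 : y ≤ 1 := by nlinarith [sq_nonneg ν]
    have hc := (cot_real (y / 2) (by linarith) (by linarith)).mul_left (y / Real.pi)
    have ht := tele.mul_left (4 / Real.pi)
    have hs := hc.add ht
    have e : y / Real.pi * (Real.pi * Real.cot (Real.pi * (y / 2)) - 1 / (y / 2))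
        + 4 / Real.pi * (1/2) = y * Real.cot (Real.pi * y / 2) := by
      rw [mul_div_assoc]
      field_simp
      ring
    rw [e] at hs
    refine hs.congr_fun ?_
    intro j
    have ha3 := a_ge j
    have hj : (0:ℝ) ≤ j := j.cast_nonneg
    have ha : (4 * ((j : ℝ) + 1) ^ 2 - 1) ≠ 0 := by linarith
    have hb : (4 * ((j : ℝ) + 1) ^ 2 - 1 + ν ^ 2) ≠ 0 := by nlinarith
    have h1 : y / 2 - ((j:ℝ) + 1) ≠ 0 := by linarith
    have h2 : y / 2 + ((j:ℝ) + 1) ≠ 0 := by linarith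
    have hb2 : 4 * ((j : ℝ) + 1) ^ 2 - 1 + ν ^ 2
        = -4 * ((y / 2 - ((j:ℝ) + 1)) * (y / 2 + ((j:ℝ) + 1))) := by linear_combination hy
    have e3 : 1 / (y / 2 - ((j:ℝ) + 1)) + 1 / (y / 2 + ((j:ℝ) + 1))
        = -4 * y / (4 * ((j : ℝ) + 1) ^ 2 - 1 + ν ^ 2) := by
      rw [hb2, div_add_div _ _ h1 h2, div_eq_div_iff (mul_ne_zero h1 h2)
        (mul_ne_zero (by norm_num) (mul_ne_zero h1 h2))]
      ring
    rw [e3]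
    generalize (j:ℝ) + 1 = J at ha hb
    have e4 : y / Real.pi * (-4 * y / (4 * J ^ 2 - 1 + ν ^ 2))
        = -4 * (1 - ν ^ 2) / (Real.pi * (4 * J ^ 2 - 1 + ν ^ 2)) := by
      rw [← hy]; field_simp
    rw [e4, div_mul_div_comm, div_add_div _ _ (mul_ne_zero hpi hb) (mul_ne_zero hpi ha),
      div_eq_div_iff (mul_ne_zero (mul_ne_zero hpi ha) hb)
        (mul_ne_zero (mul_ne_zero hpi hb) (mul_ne_zero hpi ha))]
    ring

theorem coef_summable (k : ℕ) (hk : 1 ≤ k) : Summable (fun j : ℕ =>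
    16 * ((j : ℝ) + 1) ^ 2 / (Real.pi * (4 * ((j : ℝ) + 1) ^ 2 - 1) ^ (k + 1))) := by
  refine Summable.of_nonneg_of_le ?_ ?_ (tele.summable.mul_left (8 / Real.pi))
  · intro j
    have := a_ge j
    have := Real.pi_pos
    have : 0 ≤ 4 * ((j : ℝ) + 1) ^ 2 - 1 := by linarith
    positivity
  · intro j
    have h3 := a_ge j
    have hp := Real.pi_pos
    have e : 16 * ((j : ℝ) + 1) ^ 2 = 4 * ((4 * ((j : ℝ) + 1) ^ 2 - 1) + 1) := by ring
    rw [e]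
    generalize 4 * ((j : ℝ) + 1) ^ 2 - 1 = a at h3
    have ha : 0 < a := by linarith
    rw [div_mul_div_comm, div_le_div_iff₀ (by positivity) (by positivity)]
    have h4 : a ≤ a ^ k := le_self_pow₀ (by linarith) (by omega)
    have h5 : a * a ≤ a ^ (k+1) := by
      rw [pow_succ]; exact mul_le_mul_of_nonneg_right h4 ha.le
    have h6 : (4 * (a + 1)) * a ≤ 8 * a ^ (k+1) := by nlinarith
    calc 4 * (a + 1) * (Real.pi * a) = Real.pi * ((4 * (a + 1)) * a) := by ring
      _ ≤ Real.pi * (8 * a ^ (k+1)) := mul_le_mul_of_nonneg_left h6 hp.le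
      _ = 8 * 1 * (Real.pi * a ^ (k + 1)) := by ring

theorem geom_id (n : ℕ) (c a ν : ℝ) (ha : 0 < a) :
    ∑ k ∈ Finset.Icc 1 n, (-1 : ℝ) ^ (k + 1) * (c / (Real.pi * a ^ (k + 1))) * ν ^ (2 * k)
      = c * ν ^ 2 / (Real.pi * a * (a + ν ^ 2)) * (1 - (-(ν ^ 2 / a)) ^ n) := by
  have hpi := Real.pi_ne_zero
  have hb : a + ν ^ 2 ≠ 0 := by positivity
  induction n with
  | zero => simp
  | succ n ih =>
    rw [Finset.sum_Icc_succ_top (by omega), ih]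
    rw [neg_pow, neg_pow (ν ^ 2 / a) (n+1), div_pow, div_pow]
    generalize hs : (-1:ℝ) ^ n = s
    have e1 : (-1:ℝ) ^ (n+1) = -s := by rw [pow_succ, hs]; ring
    have e2 : (-1:ℝ) ^ (n+1+1) = s := by rw [pow_succ, e1]; ring
    rw [e1, e2]
    rw [← pow_mul, ← pow_mul, show 2 * (n+1) = 2 * n + 2 by ring]
    simp only [pow_succ, pow_add]
    field_simp
    ring

theorem F_hasSum (n : ℕ) (ν : ℝ) :
    HasSum (fun j : ℕ => 16 * ((j : ℝ) + 1) ^ 2 * ν ^ 2 /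
      (Real.pi * (4 * ((j : ℝ) + 1) ^ 2 - 1) * (4 * ((j : ℝ) + 1) ^ 2 - 1 + ν ^ 2))
      * (1 - (-(ν ^ 2 / (4 * ((j : ℝ) + 1) ^ 2 - 1))) ^ n)) (F n ν) := by
  have h : HasSum (fun j : ℕ => ∑ k ∈ Finset.Icc 1 n, (-1 : ℝ) ^ (k + 1)
      * (16 * ((j : ℝ) + 1) ^ 2 / (Real.pi * (4 * ((j : ℝ) + 1) ^ 2 - 1) ^ (k + 1)))
      * ν ^ (2 * k)) (F n ν) := by
    unfold F
    refine hasSum_sum fun k hk => ?_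
    exact ((coef_summable k (Finset.mem_Icc.mp hk).1).hasSum.mul_left _).mul_right _
  refine h.congr_fun fun j => ?_
  exact (geom_id n _ _ ν (by linarith [a_ge j])).symm

/-- For every n ≥ 1 and ν ∈ [0,1] one has F_{2n}(ν) ≤ w_ν ≤ F_{2n−1}(ν). -/
theorem F_le_w_le_F (n : ℕ) (hn : 1 ≤ n) (ν : ℝ) (hν : ν ∈ Set.Icc (0 : ℝ) 1) :
    F (2 * n) ν ≤ w ν ∧ w ν ≤ F (2 * n - 1) ν := by
  have hT : ∀ j : ℕ, 0 ≤ 16 * ((j : ℝ) + 1) ^ 2 * ν ^ 2 /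
      (Real.pi * (4 * ((j : ℝ) + 1) ^ 2 - 1) * (4 * ((j : ℝ) + 1) ^ 2 - 1 + ν ^ 2)) := by
    intro j
    have h3 := a_ge j
    have : 0 ≤ 4 * ((j : ℝ) + 1) ^ 2 - 1 := by linarith
    have := Real.pi_pos
    positivity
  constructor
  · refine hasSum_le (fun j => ?_) (F_hasSum (2 * n) ν) (w_hasSum ν hν)
    have h : 0 ≤ (-(ν ^ 2 / (4 * ((j : ℝ) + 1) ^ 2 - 1))) ^ (2 * n) :=
      (even_two_mul n).pow_nonneg _
    exact mul_le_of_le_one_right (hT j) (by linarith)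
  · refine hasSum_le (fun j => ?_) (w_hasSum ν hν) (F_hasSum (2 * n - 1) ν)
    have hq : -(ν ^ 2 / (4 * ((j : ℝ) + 1) ^ 2 - 1)) ≤ 0 := by
      have := a_ge j
      exact neg_nonpos.mpr (div_nonneg (sq_nonneg _) (by linarith))
    have ho : Odd (2 * n - 1) := ⟨n - 1, by omega⟩
    have h := ho.pow_nonpos hq
    exact le_mul_of_one_le_right (hT j) (by linarith)
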